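/- arXiv:2306.11497 — 2 statements merged into one kernel-verified Lean document; each statement's English description precedes it below -/
import Mathlib

section
/- Suppose ν₁, ν₂ are probability measures on ℝ^d with finite second moments, L is μ-strongly convex and L-smooth, gradient noise is conditionally centered, and the noise distributions satisfy W₂²(D(ε(θ)), D(ε(θ'))) ≤ L_W ‖θ−θ'‖². Then for step size β ≤ 2/(μ+L), the SGD transition kernel P_β satisfies W₂²(ν₁P_β, ν₂P_β) ≤ ((1−βμ)² + β²L_W)·W₂²(ν₁, ν₂). -/
open MeasureTheory Real
open scoped RealInnerProductSpace

/-- Squared Wasserstein-2 distance, as the infimum of `E‖X−Y‖²` over couplings. -/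
noncomputable def W2sq {d : ℕ} (μ ν : Measure (EuclideanSpace ℝ (Fin d))) : ℝ :=
  sInf {r | ∃ ξ : Measure (EuclideanSpace ℝ (Fin d) × EuclideanSpace ℝ (Fin d)),
    IsProbabilityMeasure ξ ∧ ξ.map Prod.fst = μ ∧ ξ.map Prod.snd = ν ∧
    r = ∫ p, ‖p.1 - p.2‖ ^ 2 ∂ξ}

/-- One step of the SGD Markov kernel: from `x`, draw noise `e ∼ η x` and move to
`x − β (∇L x + e)`. -/
noncomputable def sgdStep {d : ℕ} (β : ℝ)
    (g : EuclideanSpace ℝ (Fin d) → EuclideanSpace ℝ (Fin d))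
    (η : EuclideanSpace ℝ (Fin d) → Measure (EuclideanSpace ℝ (Fin d)))
    (ν : Measure (EuclideanSpace ℝ (Fin d))) : Measure (EuclideanSpace ℝ (Fin d)) :=
  ν.bind (fun x => (η x).map (fun e => x - β • (g x + e)))

open ProbabilityTheory
open scoped ENNReal

theorem grad_contr {E : Type*} [NormedAddCommGroup E] [InnerProductSpace ℝ E]
    (Lf : E → ℝ) (g : E → E)
    (mu Lc : ℝ) (hmuLc : mu ≤ Lc) (hmu : 0 < mu)
    (hsc : ∀ θ θ' : E, mu / 2 * ‖θ - θ'‖ ^ 2 ≤ Lf θ - Lf θ' - ⟪g θ', θ - θ'⟫)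
    (hsm : ∀ θ θ' : E, Lf θ - Lf θ' - ⟪g θ', θ - θ'⟫ ≤ Lc / 2 * ‖θ - θ'‖ ^ 2)
    (β : ℝ) (hβ0 : 0 < β) (hβ : β ≤ 2 / (mu + Lc)) (x y : E) :
    ‖(x - β • g x) - (y - β • g y)‖ ^ 2 ≤ (1 - β * mu) ^ 2 * ‖x - y‖ ^ 2 := by
  have hβ' : β * (mu + Lc) ≤ 2 := by
    rwa [le_div_iff₀ (by linarith)] at hβ
  -- one-sided co-coercivity with a free step
  have key : ∀ x y : E, ∀ s : ℝ,
      (s - (Lc - mu) / 2 * s ^ 2) * ‖(g x - g y) - mu • (x - y)‖ ^ 2 ≤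
        Lf x - Lf y - ⟪g y, x - y⟫ - mu / 2 * ‖x - y‖ ^ 2 := by
    intro x y s
    obtain ⟨D, hD⟩ : ∃ D, D = (g x - g y) - mu • (x - y) := ⟨_, rfl⟩
    obtain ⟨w, hw⟩ : ∃ w, w = x - y := ⟨_, rfl⟩
    have hgx : g x = g y + D + mu • w := by rw [hD, hw]; abel
    have h1 := hsc (x - s • D) y
    have h2 := hsm (x - s • D) x
    have e1 : x - s • D - y = w - s • D := by rw [hw]; abel
    have e2 : x - s • D - x = -(s • D) := by abel
    rw [e1] at h1
    rw [e2, hgx] at h2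
    rw [← hD, ← hw]
    have n1 : ‖w - s • D‖ ^ 2 = ‖w‖ ^ 2 - 2 * s * ⟪w, D⟫ + s ^ 2 * ‖D‖ ^ 2 := by
      rw [norm_sub_sq_real, inner_smul_right, norm_smul, mul_pow, Real.norm_eq_abs, sq_abs]; ring
    have n2 : ‖-(s • D)‖ ^ 2 = s ^ 2 * ‖D‖ ^ 2 := by
      rw [norm_neg, norm_smul, mul_pow, Real.norm_eq_abs, sq_abs]
    have n3 : ⟪g y, w - s • D⟫ = ⟪g y, w⟫ - s * ⟪g y, D⟫ := by
      rw [inner_sub_right, inner_smul_right]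
    have n4 : ⟪g y + D + mu • w, -(s • D)⟫ = -s * ⟪g y, D⟫ - s * ‖D‖ ^ 2 - s * mu * ⟪w, D⟫ := by
      rw [inner_neg_right, inner_smul_right, inner_add_left, inner_add_left, inner_smul_left,
        real_inner_self_eq_norm_sq]
      simp; ring
    rw [n1, n3] at h1
    rw [n2, n4] at h2
    nlinarith
  obtain ⟨D, hD⟩ : ∃ D, D = (g x - g y) - mu • (x - y) := ⟨_, rfl⟩
  obtain ⟨w, hw⟩ : ∃ w, w = x - y := ⟨_, rfl⟩
  have hsum : ∀ s : ℝ, (2 * s - (Lc - mu) * s ^ 2) * ‖D‖ ^ 2 ≤ ⟪D, w⟫ := by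
    intro s
    have h1 := key x y s
    have h2 := key y x s
    have e : (g y - g x) - mu • (y - x) = - D := by
      rw [hD, ← neg_sub x y, smul_neg]; abel
    have e' : y - x = -w := by rw [hw]; abel
    rw [e, norm_neg, e', norm_neg, inner_neg_right] at h2
    rw [← hD, ← hw] at h1
    have hgx : g x = g y + D + mu • w := by rw [hD, hw]; abel
    rw [hgx, inner_add_left, inner_add_left, inner_smul_left, real_inner_self_eq_norm_sq] at h2
    simp at h2
    nlinarith
  have hpos : 0 ≤ ⟪D, w⟫ := by simpa using hsum 0
  have hco : ‖D‖ ^ 2 ≤ (Lc - mu) * ⟪D, w⟫ := by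
    rcases eq_or_lt_of_le hmuLc with h | h
    · subst h
      simp only [sub_self, zero_mul, sub_zero] at hsum ⊢
      by_contra hc
      push Not at hc
      have := hsum ((⟪D, w⟫ + 1) / (2 * ‖D‖ ^ 2))
      rw [show 2 * ((⟪D, w⟫ + 1) / (2 * ‖D‖ ^ 2)) * ‖D‖ ^ 2 = ⟪D, w⟫ + 1 by
        generalize ‖D‖ ^ 2 = t at hc
        field_simp] at this
      linarith
    · have hM : 0 < Lc - mu := by linarith
      have := hsum (1 / (Lc - mu))
      rw [show 2 * (1 / (Lc - mu)) - (Lc - mu) * (1 / (Lc - mu)) ^ 2 = 1 / (Lc - mu) by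
        field_simp; ring] at this
      rw [div_mul_eq_mul_div, one_mul, div_le_iff₀ hM] at this
      linarith
  have e : (x - β • g x) - (y - β • g y) = (1 - β * mu) • w - β • D := by
    rw [hD, hw]; module
  rw [e, norm_sub_sq_real, norm_smul, norm_smul, mul_pow, mul_pow, inner_smul_left,
    inner_smul_right, ← hw, real_inner_comm]
  simp only [Real.norm_eq_abs, sq_abs, conj_trivial]
  nlinarith [mul_nonneg hβ0.le hpos, mul_nonneg (mul_nonneg hβ0.le hpos) (sub_nonneg.2 hβ'),
    mul_le_mul_of_nonneg_left hco (sq_nonneg β)]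

theorem disc_approx {I : Type*} [Countable I] (W m : I → ℝ≥0∞) (hW : ∀ i, W i ≠ ∞)
    (hm : ∀ i, m i ≠ ∞) (hs : ∑' i, W i * m i ≠ ∞) {ε : ℝ≥0∞} (hε : ε ≠ 0) :
    ∃ a : I →₀ ℚ, (∀ i, ENNReal.ofReal (a i : ℝ) ≤ m i) ∧
      ∑' i, W i * (m i - ENNReal.ofReal (a i : ℝ)) ≤ ε := by
  classical
  have hε2 : ε / 2 ≠ 0 := (ENNReal.half_pos hε).ne'
  obtain ⟨δ, hδ, hδs⟩ := ENNReal.exists_pos_sum_of_countable' hε2 I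
  have hex : ∀ i, ∃ b : ℚ, ENNReal.ofReal (b : ℝ) ≤ m i ∧
      W i * (m i - ENNReal.ofReal (b : ℝ)) ≤ δ i := by
    intro i
    by_cases h0 : m i = 0
    · exact ⟨0, by simp [h0]⟩
    · have hd : δ i / (W i + 1) ≠ 0 := by
        simp [ENNReal.div_eq_zero_iff, (hδ i).ne', hW i]
      have hlt : m i - δ i / (W i + 1) < m i := ENNReal.sub_lt_self (hm i) h0 hd
      obtain ⟨q, hq0, h1, h2⟩ := ENNReal.lt_iff_exists_rat_btwn.1 hlt
      refine ⟨q, h2.le, ?_⟩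
      · have : m i - ENNReal.ofReal (q:ℝ) ≤ δ i / (W i + 1) := by
          rw [tsub_le_iff_left, add_comm]
          exact tsub_le_iff_left.1 h1.le
        calc _ ≤ (W i + 1) * (δ i / (W i + 1)) := mul_le_mul' le_self_add this
          _ ≤ δ i := ENNReal.mul_div_le
  choose b hb1 hb2 using hex
  have ht := ENNReal.tendsto_tsum_compl_atTop_zero hs
  obtain ⟨S, hS⟩ := ((ENNReal.tendsto_nhds_zero.1 ht) (ε/2) (ENNReal.half_pos hε)).exists
  refine ⟨Finsupp.onFinset S (fun i => if i ∈ S then b i else 0) (by intro i; simp; tauto), ?_, ?_⟩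
  · intro i
    simp only [Finsupp.onFinset_apply]
    split_ifs
    · exact hb1 i
    · simp
  · rw [← ENNReal.add_halves ε]
    have : ∑' i, W i * m i * (if i ∈ S then 0 else 1) ≤ ε / 2 := by
      refine le_trans (le_of_eq ?_) hS
      rw [show (∑' (a : {x // x ∉ S}), W a * m a) = ∑' a : ((S : Set I)ᶜ : Set I), W a * m a from rfl]
      rw [tsum_subtype ((S : Set I)ᶜ) (fun i => W i * m i)]
      refine tsum_congr fun i => ?_
      by_cases h : i ∈ S <;> simp [h]
    refine le_trans ?_ (add_le_add hδs.le this)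
    rw [← ENNReal.tsum_add]
    refine ENNReal.tsum_le_tsum fun i => ?_
    simp only [Finsupp.onFinset_apply]
    by_cases h : i ∈ S
    · simpa [h] using hb2 i
    · simp [h]

/-- complete a sub-coupling to a coupling by the product of the residuals -/
noncomputable def fillC (p q : ℕ → ℝ≥0∞) (a : ℕ → ℕ → ℝ≥0∞) (k l : ℕ) : ℝ≥0∞ :=
  a k l + (p k - ∑' l, a k l) * (q l - ∑' k, a k l) / (1 - ∑' k, ∑' l, a k l)

theorem fillC_swap (p q : ℕ → ℝ≥0∞) (a : ℕ → ℕ → ℝ≥0∞) (k l : ℕ) :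
    fillC p q a k l = fillC q p (fun l k => a k l) l k := by
  unfold fillC
  rw [mul_comm, ENNReal.tsum_comm]

theorem resid_sum (q : ℕ → ℝ≥0∞) (a : ℕ → ℕ → ℝ≥0∞) (hq : ∑' l, q l = 1)
    (hc : ∀ l, ∑' k, a k l ≤ q l) :
    ∑' l, (q l - ∑' k, a k l) = 1 - ∑' k, ∑' l, a k l := by
  have hA : ∑' l, ∑' k, a k l ≤ 1 := hq ▸ ENNReal.tsum_le_tsum hc
  rw [ENNReal.tsum_sub (ne_top_of_le_ne_top ENNReal.one_ne_top hA) hc, hq, ENNReal.tsum_comm]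

theorem fillC_resid_row (p q : ℕ → ℝ≥0∞) (a : ℕ → ℕ → ℝ≥0∞) (hp : ∑' k, p k = 1)
    (hq : ∑' l, q l = 1)
    (hr : ∀ k, ∑' l, a k l ≤ p k) (hc : ∀ l, ∑' k, a k l ≤ q l) (k : ℕ) :
    ∑' l, (p k - ∑' l, a k l) * (q l - ∑' k, a k l) / (1 - ∑' k, ∑' l, a k l) =
      p k - ∑' l, a k l := by
  simp_rw [div_eq_mul_inv]
  rw [ENNReal.tsum_mul_right, ENNReal.tsum_mul_left, resid_sum q a hq hc, mul_assoc]
  by_cases h : 1 - ∑' k, ∑' l, a k l = 0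
  · have h2 := resid_sum p (fun l k => a k l) hp hr
    rw [ENNReal.tsum_comm, h, ENNReal.tsum_eq_zero] at h2
    rw [h2 k]; simp
  · rw [ENNReal.mul_inv_cancel h (ne_top_of_le_ne_top ENNReal.one_ne_top tsub_le_self), mul_one]

theorem fillC_row (p q : ℕ → ℝ≥0∞) (a : ℕ → ℕ → ℝ≥0∞) (hp : ∑' k, p k = 1)
    (hq : ∑' l, q l = 1)
    (hr : ∀ k, ∑' l, a k l ≤ p k) (hc : ∀ l, ∑' k, a k l ≤ q l) (k : ℕ) :
    ∑' l, fillC p q a k l = p k := by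
  unfold fillC
  rw [ENNReal.tsum_add, fillC_resid_row p q a hp hq hr hc, add_tsub_cancel_of_le (hr k)]

theorem fillC_col (p q : ℕ → ℝ≥0∞) (a : ℕ → ℕ → ℝ≥0∞) (hp : ∑' k, p k = 1)
    (hq : ∑' l, q l = 1)
    (hr : ∀ k, ∑' l, a k l ≤ p k) (hc : ∀ l, ∑' k, a k l ≤ q l) (l : ℕ) :
    ∑' k, fillC p q a k l = q l := by
  simp_rw [fillC_swap p q a]
  exact fillC_row q p (fun l k => a k l) hq hp hc hr l

theorem fillC_cost (p q W : ℕ → ℝ≥0∞) (a C : ℕ → ℕ → ℝ≥0∞) (hp : ∑' k, p k = 1)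
    (hq : ∑' l, q l = 1)
    (hr : ∀ k, ∑' l, a k l ≤ p k) (hc : ∀ l, ∑' k, a k l ≤ q l)
    (hC : ∀ k l, C k l ≤ W k + W l) :
    ∑' k, ∑' l, C k l * fillC p q a k l ≤ ∑' k, ∑' l, C k l * a k l +
      (∑' k, W k * (p k - ∑' l, a k l) + ∑' l, W l * (q l - ∑' k, a k l)) := by
  set R : ℕ → ℕ → ℝ≥0∞ := fun k l =>
    (p k - ∑' l, a k l) * (q l - ∑' k, a k l) / (1 - ∑' k, ∑' l, a k l) with hR
  have hRr : ∀ k, ∑' l, R k l = p k - ∑' l, a k l := fillC_resid_row p q a hp hq hr hc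
  have hRc : ∀ l, ∑' k, R k l = q l - ∑' k, a k l := by
    intro l
    have := fillC_resid_row q p (fun l k => a k l) hq hp hc hr l
    rw [← this]
    refine tsum_congr fun k => ?_
    rw [hR]
    simp only
    rw [mul_comm, ENNReal.tsum_comm]
  have h1 : ∑' k, ∑' l, C k l * fillC p q a k l =
      ∑' k, ∑' l, C k l * a k l + ∑' k, ∑' l, C k l * R k l := by
    simp_rw [fillC, mul_add, ENNReal.tsum_add]
    rfl
  rw [h1]
  gcongr
  calc ∑' k, ∑' l, C k l * R k l ≤ ∑' k, ∑' l, (W k * R k l + W l * R k l) := by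
        refine ENNReal.tsum_le_tsum fun k => ENNReal.tsum_le_tsum fun l => ?_
        rw [← add_mul]
        gcongr
        exact hC k l
    _ = ∑' k, W k * (p k - ∑' l, a k l) + ∑' l, W l * (q l - ∑' k, a k l) := by
        simp_rw [ENNReal.tsum_add]
        congr 1
        · refine tsum_congr fun k => ?_
          rw [ENNReal.tsum_mul_left, hRr]
        · rw [ENNReal.tsum_comm]
          refine tsum_congr fun k => ?_
          rw [ENNReal.tsum_mul_left, hRc]

/-- discrete couplings -/
def IsC (p q : ℕ → ℝ≥0∞) (m : ℕ → ℕ → ℝ≥0∞) : Prop :=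
  (∀ k, ∑' l, m k l = p k) ∧ (∀ l, ∑' k, m k l = q l)

theorem exists_candidate (p q W : ℕ → ℝ≥0∞) (C m : ℕ → ℕ → ℝ≥0∞) (hp : ∑' k, p k = 1)
    (hq : ∑' l, q l = 1) (hm : IsC p q m) (hC : ∀ k l, C k l ≤ W k + W l)
    (hW : ∀ k, W k ≠ ∞) (hWp : ∑' k, W k * p k ≠ ∞) (hWq : ∑' k, W k * q k ≠ ∞)
    (B : ℝ≥0∞) (hB : ∑' k, ∑' l, C k l * m k l < B) :
    ∃ a : ℕ × ℕ →₀ ℚ, (∀ k, ∑' l, ENNReal.ofReal (a (k, l) : ℝ) ≤ p k) ∧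
      (∀ l, ∑' k, ENNReal.ofReal (a (k, l) : ℝ) ≤ q l) ∧
      ∑' k, ∑' l, C k l * fillC p q (fun k l => ENNReal.ofReal (a (k, l) : ℝ)) k l ≤ B := by
  have hp1 : ∀ k, p k ≤ 1 := fun k => hp ▸ ENNReal.le_tsum k
  have hq1 : ∀ k, q k ≤ 1 := fun k => hq ▸ ENNReal.le_tsum k
  have hmp : ∀ k l, m k l ≤ p k := fun k l => hm.1 k ▸ ENNReal.le_tsum l
  have e1 : ∀ m : ℕ → ℕ → ℝ≥0∞, ∑' i : ℕ × ℕ, (W i.1 + W i.2) * m i.1 i.2 =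
      ∑' k, W k * ∑' l, m k l + ∑' l, W l * ∑' k, m k l := by
    intro m
    simp_rw [add_mul]
    rw [ENNReal.tsum_add]
    congr 1
    · rw [ENNReal.tsum_prod (f := fun k l => W k * m k l)]
      simp_rw [ENNReal.tsum_mul_left]
    · rw [ENNReal.tsum_prod (f := fun k l => W l * m k l), ENNReal.tsum_comm]
      simp_rw [ENNReal.tsum_mul_left]
  obtain ⟨a, ha, has⟩ := disc_approx (I := ℕ × ℕ) (fun i => W i.1 + W i.2) (fun i => m i.1 i.2)
    (fun i => ENNReal.add_ne_top.2 ⟨hW _, hW _⟩)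
    (fun i => ne_top_of_le_ne_top ENNReal.one_ne_top ((hmp _ _).trans (hp1 _)))
    (by rw [e1]; simp_rw [hm.1, hm.2]; exact ENNReal.add_ne_top.2 ⟨hWp, hWq⟩)
    (ε := B - ∑' k, ∑' l, C k l * m k l) (tsub_pos_of_lt hB).ne'
  have hr : ∀ k, ∑' l, ENNReal.ofReal (a (k, l) : ℝ) ≤ p k := fun k => by
    rw [← hm.1 k]; exact ENNReal.tsum_le_tsum fun l => ha (k, l)
  have hc : ∀ l, ∑' k, ENNReal.ofReal (a (k, l) : ℝ) ≤ q l := fun l => by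
    rw [← hm.2 l]; exact ENNReal.tsum_le_tsum fun k => ha (k, l)
  refine ⟨a, hr, hc, ?_⟩
  refine (fillC_cost p q W _ C hp hq hr hc hC).trans ?_
  have h2 := e1 (fun k l => m k l - ENNReal.ofReal (a (k, l) : ℝ))
  simp only [Prod.mk.eta] at h2
  rw [h2] at has
  have h3 : ∀ k, ∑' l, (m k l - ENNReal.ofReal (a (k, l) : ℝ)) =
      p k - ∑' l, ENNReal.ofReal (a (k, l) : ℝ) := by
    intro k
    rw [ENNReal.tsum_sub (ne_top_of_le_ne_top ENNReal.one_ne_top ((hr k).trans (hp1 k)))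
      (fun l => ha (k, l)), hm.1]
  have h4 : ∀ l, ∑' k, (m k l - ENNReal.ofReal (a (k, l) : ℝ)) =
      q l - ∑' k, ENNReal.ofReal (a (k, l) : ℝ) := by
    intro l
    rw [ENNReal.tsum_sub (ne_top_of_le_ne_top ENNReal.one_ne_top ((hc l).trans (hq1 l)))
      (fun k => ha (k, l)), hm.2]
  simp_rw [h3, h4] at has
  refine (add_le_add (ENNReal.tsum_le_tsum fun k => ENNReal.tsum_le_tsum fun l =>
    mul_le_mul_right (ha (k, l)) (C k l)) has).trans ?_
  rw [add_tsub_cancel_of_le hB.le]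

theorem disc_selection {Z : Type*} [MeasurableSpace Z] (p q : Z → ℕ → ℝ≥0∞)
    (hpm : ∀ k, Measurable fun z => p z k) (hqm : ∀ k, Measurable fun z => q z k)
    (W : ℕ → ℝ≥0∞) (C : ℕ → ℕ → ℝ≥0∞) (hC : ∀ k l, C k l ≤ W k + W l)
    (hW : ∀ k, W k ≠ ∞) (B : Z → ℝ≥0∞) (hBm : Measurable B) :
    ∃ m : Z → ℕ → ℕ → ℝ≥0∞, (∀ k l, Measurable fun z => m z k l) ∧
      ∀ z, ∑' k, p z k = 1 → ∑' k, q z k = 1 → ∑' k, W k * p z k ≠ ∞ → ∑' k, W k * q z k ≠ ∞ →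
        (∃ m0, IsC (p z) (q z) m0 ∧ ∑' k, ∑' l, C k l * m0 k l < B z) →
        IsC (p z) (q z) (m z) ∧ ∑' k, ∑' l, C k l * m z k l ≤ B z := by
  classical
  obtain ⟨A, hA⟩ := exists_surjective_nat (ℕ × ℕ →₀ ℚ)
  let f : ℕ → Z → ℕ → ℕ → ℝ≥0∞ := fun n z =>
    fillC (p z) (q z) (fun k l => ENNReal.ofReal (A n (k, l) : ℝ))
  have hf : ∀ n k l, Measurable fun z => f n z k l := by
    intro n k l
    simp only [f, fillC]
    have := hpm k
    have := hqm l
    fun_prop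
  let P : ℕ → Z → Prop := fun n z => (∀ k, ∑' l, ENNReal.ofReal (A n (k, l) : ℝ) ≤ p z k) ∧
      (∀ l, ∑' k, ENNReal.ofReal (A n (k, l) : ℝ) ≤ q z l) ∧
      ∑' k, ∑' l, C k l * f n z k l ≤ B z
  have hP : ∀ n, MeasurableSet {z | P n z} := by
    intro n
    have h3 : Measurable fun z => ∑' k, ∑' l, C k l * f n z k l :=
      Measurable.tsum fun k => Measurable.tsum fun l => (hf n k l).const_mul _
    have : {z | P n z} = (⋂ k, {z | ∑' l, ENNReal.ofReal (A n (k, l) : ℝ) ≤ p z k}) ∩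
        ((⋂ l, {z | ∑' k, ENNReal.ofReal (A n (k, l) : ℝ) ≤ q z l}) ∩
          {z | ∑' k, ∑' l, C k l * f n z k l ≤ B z}) := by
      ext z; simp [P]
    rw [this]
    exact (MeasurableSet.iInter fun k => measurableSet_le measurable_const (hpm k)).inter
      ((MeasurableSet.iInter fun k => measurableSet_le measurable_const (hqm k)).inter
        (measurableSet_le h3 hBm))
  let P' : ℕ → Z → Prop := fun n z => P n z ∨ ∀ j, ¬ P j z
  have hP' : ∀ n, MeasurableSet {z | P' n z} := by
    intro n
    have : {z | P' n z} = {z | P n z} ∪ ⋂ j, {z | P j z}ᶜ := by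
      ext z; simp [P']
    rw [this]
    exact (hP n).union (MeasurableSet.iInter fun j => (hP j).compl)
  have hex : ∀ z, ∃ n, P' n z := by
    intro z
    by_cases h : ∃ n, P n z
    · obtain ⟨n, hn⟩ := h
      exact ⟨n, Or.inl hn⟩
    · exact ⟨0, Or.inr (not_exists.1 h)⟩
  refine ⟨fun z => f (Nat.find (hex z)) z, fun k l => ?_, ?_⟩
  · exact Measurable.find (f := fun n z => f n z k l) (fun n => hf n k l) hP' hex
  · intro z hp hq hWp hWq ⟨m0, hm0, hcost⟩
    obtain ⟨a, ha1, ha2, ha3⟩ := exists_candidate (p z) (q z) W C m0 hp hq hm0 hC hW hWp hWq _ hcost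
    obtain ⟨n, rfl⟩ := hA a
    have hPn : P n z := ⟨ha1, ha2, ha3⟩
    have hfind : P (Nat.find (hex z)) z := by
      rcases Nat.find_spec (hex z) with h | h
      · exact h
      · exact absurd hPn (h n)
    exact ⟨⟨fillC_row _ _ _ hp hq hfind.1 hfind.2.1, fillC_col _ _ _ hp hq hfind.1 hfind.2.1⟩,
      hfind.2.2⟩

section lift
variable {E : Type*} [MeasurableSpace E]

noncomputable def wt (ι : E → ℕ) (P : Measure E) (k : ℕ) : ℝ≥0∞ := P (ι ⁻¹' {k})

noncomputable def dens (ι : E → ℕ) (P Q : Measure E) (m : ℕ → ℕ → ℝ≥0∞) (x : E × E) : ℝ≥0∞ :=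
  m (ι x.1) (ι x.2) / (wt ι P (ι x.1) * wt ι Q (ι x.2))

theorem lintegral_iota (ι : E → ℕ) (hι : Measurable ι) (P : Measure E) (G : ℕ → ℝ≥0∞) :
    ∫⁻ e, G (ι e) ∂P = ∑' k, G k * wt ι P k := by
  rw [← lintegral_map (f := G) (measurable_of_countable _) hι, lintegral_countable']
  refine tsum_congr fun k => ?_
  rw [Measure.map_apply hι (measurableSet_singleton k), wt]

theorem sum_wt (ι : E → ℕ) (hι : Measurable ι) (P : Measure E) [IsProbabilityMeasure P] :
    ∑' k, wt ι P k = 1 := by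
  have := lintegral_iota ι hι P (fun _ => 1)
  simpa using this.symm

theorem ae_wt (ι : E → ℕ) (P : Measure E) :
    ∀ᵐ e ∂P, wt ι P (ι e) ≠ 0 := by
  have : ∀ k, ∀ᵐ e ∂P, wt ι P k = 0 → ι e ≠ k := by
    intro k
    by_cases h : wt ι P k = 0
    · have h' : P (ι ⁻¹' {k}) = 0 := h
      filter_upwards [measure_eq_zero_iff_ae_notMem.1 h'] with e he _ using he
    · exact Filter.Eventually.of_forall fun e h' => absurd h' h
  filter_upwards [ae_all_iff.2 this] with e he h
  exact he _ h rfl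

theorem wt_ne_top (ι : E → ℕ) (P : Measure E) [IsProbabilityMeasure P] (k : ℕ) :
    wt ι P k ≠ ∞ := measure_ne_top _ _

theorem cancel1 (p q : ℕ → ℝ≥0∞) (m : ℕ → ℕ → ℝ≥0∞) (hm : IsC p q m)
    (hqt : ∀ k, q k ≠ ∞) (k l : ℕ) : m k l / (p k * q l) * q l = m k l / p k := by
  by_cases h : q l = 0
  · have : m k l = 0 := by
      have := hm.2 l
      rw [h, ENNReal.tsum_eq_zero] at this
      exact this k
    simp [this]
  · rw [div_eq_mul_inv, ENNReal.mul_inv (Or.inr (hqt l)) (Or.inr h), mul_assoc, mul_assoc,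
      ENNReal.inv_mul_cancel h (hqt l), mul_one, div_eq_mul_inv]

theorem isC_swap {p q : ℕ → ℝ≥0∞} {m : ℕ → ℕ → ℝ≥0∞} (hm : IsC p q m) :
    IsC q p (fun l k => m k l) := ⟨hm.2, hm.1⟩

theorem cancel2 (p q : ℕ → ℝ≥0∞) (m : ℕ → ℕ → ℝ≥0∞) (hm : IsC p q m)
    (hpt : ∀ k, p k ≠ ∞) (hqt : ∀ k, q k ≠ ∞) (k l : ℕ) :
    m k l / (p k * q l) * q l * p k = m k l := by
  rw [cancel1 p q m hm hqt]
  have := cancel1 q p _ (isC_swap hm) hpt l k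
  by_cases h : p k = 0
  · have : m k l = 0 := by
      have := hm.1 k
      rw [h, ENNReal.tsum_eq_zero] at this
      exact this l
    simp [this]
  · exact ENNReal.div_mul_cancel h (hpt k)

theorem dens_meas (ι : E → ℕ) (hι : Measurable ι) (P Q : Measure E) (m : ℕ → ℕ → ℝ≥0∞) : Measurable (dens ι P Q m) := by
  have : Measurable fun x : ℕ × ℕ => m x.1 x.2 / (wt ι P x.1 * wt ι Q x.2) :=
    measurable_of_countable _
  exact this.comp ((hι.comp measurable_fst).prodMk (hι.comp measurable_snd))

theorem lift_inner (ι : E → ℕ) (hι : Measurable ι) (P Q : Measure E)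
    [IsProbabilityMeasure P] [IsProbabilityMeasure Q] (m : ℕ → ℕ → ℝ≥0∞)
    (hm : IsC (wt ι P) (wt ι Q) m) : ∀ᵐ e ∂P, ∫⁻ f, dens ι P Q m (e, f) ∂Q = 1 := by
  filter_upwards [ae_wt ι P] with e he
  have := lintegral_iota ι hι Q (fun l => m (ι e) l / (wt ι P (ι e) * wt ι Q l))
  simp only [dens]
  rw [this]
  simp_rw [cancel1 _ _ m hm (wt_ne_top ι Q), div_eq_mul_inv]
  rw [ENNReal.tsum_mul_right, hm.1, ENNReal.mul_inv_cancel he (wt_ne_top ι P _)]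

theorem lift_fst (ι : E → ℕ) (hι : Measurable ι) (P Q : Measure E)
    [IsProbabilityMeasure P] [IsProbabilityMeasure Q] (m : ℕ → ℕ → ℝ≥0∞)
    (hm : IsC (wt ι P) (wt ι Q) m) : ((P.prod Q).withDensity (dens ι P Q m)).map Prod.fst = P := by
  ext A hA
  have hd := dens_meas ι hι P Q m
  rw [Measure.map_apply measurable_fst hA, withDensity_apply _ (measurable_fst hA),
    ← lintegral_indicator (measurable_fst hA), lintegral_prod _
      ((hd.indicator (measurable_fst hA)).aemeasurable)]
  have : ∀ᵐ e ∂P, ∫⁻ f, (Prod.fst ⁻¹' A).indicator (dens ι P Q m) (e, f) ∂Q =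
      A.indicator (fun _ => 1) e := by
    filter_upwards [lift_inner ι hι P Q m hm] with e he
    by_cases h : e ∈ A
    · simpa [Set.indicator, h] using he
    · simp [Set.indicator, h]
  rw [lintegral_congr_ae this, lintegral_indicator hA]
  simp

theorem lift_snd (ι : E → ℕ) (hι : Measurable ι) (P Q : Measure E)
    [IsProbabilityMeasure P] [IsProbabilityMeasure Q] (m : ℕ → ℕ → ℝ≥0∞)
    (hm : IsC (wt ι P) (wt ι Q) m) : ((P.prod Q).withDensity (dens ι P Q m)).map Prod.snd = Q := by
  ext A hA
  have hd := dens_meas ι hι P Q m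
  rw [Measure.map_apply measurable_snd hA, withDensity_apply _ (measurable_snd hA),
    ← lintegral_indicator (measurable_snd hA), lintegral_prod_symm _
      ((hd.indicator (measurable_snd hA)).aemeasurable)]
  have : ∀ᵐ f ∂Q, ∫⁻ e, (Prod.snd ⁻¹' A).indicator (dens ι P Q m) (e, f) ∂P =
      A.indicator (fun _ => 1) f := by
    filter_upwards [lift_inner ι hι Q P _ (isC_swap hm)] with e he
    by_cases h : e ∈ A
    · simpa [Set.indicator, h, dens, mul_comm] using he
    · simp [Set.indicator, h]
  rw [lintegral_congr_ae this, lintegral_indicator hA]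
  simp

theorem lift_cost (ι : E → ℕ) (hι : Measurable ι) (P Q : Measure E)
    [IsProbabilityMeasure P] [IsProbabilityMeasure Q] (m : ℕ → ℕ → ℝ≥0∞)
    (hm : IsC (wt ι P) (wt ι Q) m) (F : ℕ → ℕ → ℝ≥0∞) :
    ∫⁻ x, F (ι x.1) (ι x.2) ∂((P.prod Q).withDensity (dens ι P Q m)) =
      ∑' k, ∑' l, F k l * m k l := by
  have hd := dens_meas ι hι P Q m
  have hF : Measurable fun x : E × E => F (ι x.1) (ι x.2) := by
    have : Measurable fun x : ℕ × ℕ => F x.1 x.2 := measurable_of_countable _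
    exact this.comp ((hι.comp measurable_fst).prodMk (hι.comp measurable_snd))
  rw [lintegral_withDensity_eq_lintegral_mul _ hd hF, lintegral_prod _ (hd.mul hF).aemeasurable]
  have h1 : ∀ e, ∫⁻ f, (dens ι P Q m * fun x : E × E => F (ι x.1) (ι x.2)) (e, f) ∂Q =
      (fun k => ∑' l, (m k l / (wt ι P k * wt ι Q l) * F k l) * wt ι Q l) (ι e) := by
    intro e
    exact lintegral_iota ι hι Q (fun l => m (ι e) l / (wt ι P (ι e) * wt ι Q l) * F (ι e) l)
  simp_rw [h1]
  rw [lintegral_iota ι hι P (fun k => ∑' l, (m k l / (wt ι P k * wt ι Q l) * F k l) * wt ι Q l)]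
  refine tsum_congr fun k => ?_
  rw [← ENNReal.tsum_mul_right]
  refine tsum_congr fun l => ?_
  conv_rhs => rw [← cancel2 _ _ m hm (wt_ne_top ι P) (wt_ne_top ι Q) k l]
  ring

end lift

/-- discrete coupling from a coupling -/
theorem disc_of_coupling {E : Type*} [MeasurableSpace E] (ι : E → ℕ) (hι : Measurable ι)
    (P Q : Measure E) (ρ : Measure (E × E)) (h1 : ρ.map Prod.fst = P) (h2 : ρ.map Prod.snd = Q)
    (F : ℕ → ℕ → ℝ≥0∞) :
    ∃ m, IsC (wt ι P) (wt ι Q) m ∧ ∑' k, ∑' l, F k l * m k l = ∫⁻ x, F (ι x.1) (ι x.2) ∂ρ := by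
  have hj : Measurable fun x : E × E => (ι x.1, ι x.2) :=
    (hι.comp measurable_fst).prodMk (hι.comp measurable_snd)
  have key : ∀ F : ℕ → ℕ → ℝ≥0∞, ∑' k, ∑' l, F k l * (ρ.map fun x : E × E => (ι x.1, ι x.2)) {(k, l)} =
      ∫⁻ x, F (ι x.1) (ι x.2) ∂ρ := by
    intro F
    rw [← lintegral_map (f := fun y : ℕ × ℕ => F y.1 y.2) (measurable_of_countable _) hj,
      lintegral_countable', ← ENNReal.tsum_prod]
  refine ⟨fun k l => (ρ.map fun x : E × E => (ι x.1, ι x.2)) {(k, l)}, ⟨?_, ?_⟩, key F⟩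
  · intro k
    have := key (fun k' _ => if k' = k then 1 else 0)
    simp only [ite_mul, one_mul, zero_mul] at this
    rw [tsum_eq_single k (by intro b hb; simp [hb])] at this
    simp only [if_true] at this
    rw [this]
    rw [← lintegral_map (μ := ρ) (f := fun e : E => if ι e = k then (1:ℝ≥0∞) else 0)
      (by exact (measurable_of_countable (fun j : ℕ => if j = k then (1:ℝ≥0∞) else 0)).comp hι)
      measurable_fst, h1, lintegral_iota ι hι P (fun j : ℕ => if j = k then (1:ℝ≥0∞) else 0)]
    rw [tsum_eq_single k (by intro b hb; simp [hb])]
    simp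
  · intro k
    have := key (fun _ k' => if k' = k then 1 else 0)
    simp only [ite_mul, one_mul, zero_mul] at this
    rw [ENNReal.tsum_comm, tsum_eq_single k (by intro b hb; simp [hb])] at this
    simp only [if_true] at this
    rw [this]
    rw [← lintegral_map (μ := ρ) (f := fun e : E => if ι e = k then (1:ℝ≥0∞) else 0)
      (by exact (measurable_of_countable (fun j : ℕ => if j = k then (1:ℝ≥0∞) else 0)).comp hι)
      measurable_snd, h2, lintegral_iota ι hι Q (fun j : ℕ => if j = k then (1:ℝ≥0∞) else 0)]
    rw [tsum_eq_single k (by intro b hb; simp [hb])]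
    simp

theorem sq_perturb (s : ℝ) (hs : 0 < s) : ∃ δ : ℝ, 0 < δ ∧ ∀ a b : ℝ, 0 ≤ a → 0 ≤ b →
    a ≤ b + 2 * δ → a ^ 2 ≤ (1 + s) * b ^ 2 + s := by
  refine ⟨s / (2 * (1 + s)), by positivity, fun a b ha hb h => ?_⟩
  have e : 2 * (s / (2 * (1 + s))) = s / (1 + s) := by field_simp
  rw [e] at h
  set t := s / (1 + s) with ht
  have ht0 : 0 < t := by positivity
  have hts : t * (1 + s) = s := by rw [ht]; field_simp
  have h1 : a ^ 2 ≤ (b + t) ^ 2 := by gcongr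
  have h2 : s * (2 * b * t) ≤ s * (s * b ^ 2) + t ^ 2 := by nlinarith [sq_nonneg (s * b - t)]
  have h3 : t ^ 2 * (1 + s) ≤ s * s := by
    calc t ^ 2 * (1 + s) = t * s := by rw [sq, mul_assoc, hts]
      _ ≤ s * s := by
        gcongr
        nlinarith
  have h4 : s * (b + t) ^ 2 ≤ s * ((1 + s) * b ^ 2 + s) := by nlinarith
  exact h1.trans (le_of_mul_le_mul_left h4 hs)

theorem coupling_kernel {Z E : Type*} [MeasurableSpace Z] [NormedAddCommGroup E]
    [MeasurableSpace E] [BorelSpace E] [SecondCountableTopology E]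
    (P Q : Kernel Z E) [IsMarkovKernel P] [IsMarkovKernel Q] (c : Z → ℝ) (hcm : Measurable c)
    (τ : ℝ) (hτ : 0 < τ) :
    ∃ K : Kernel Z (E × E), ∀ z, 0 ≤ c z → ∫⁻ e, ENNReal.ofReal (‖e‖ ^ 2) ∂(P z) ≠ ∞ →
      ∫⁻ e, ENNReal.ofReal (‖e‖ ^ 2) ∂(Q z) ≠ ∞ →
      (∀ σ : ℝ, 0 < σ → ∃ ρ : Measure (E × E), ρ.map Prod.fst = P z ∧ ρ.map Prod.snd = Q z ∧
        ∫⁻ x, ENNReal.ofReal (‖x.1 - x.2‖ ^ 2) ∂ρ ≤ ENNReal.ofReal (c z + σ)) →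
      (K z).map Prod.fst = P z ∧ (K z).map Prod.snd = Q z ∧
        ∫⁻ x, ENNReal.ofReal (‖x.1 - x.2‖ ^ 2) ∂(K z) ≤ ENNReal.ofReal ((1 + τ) * c z + τ) := by
  classical
  obtain ⟨s, hs, hs1, hsτ⟩ : ∃ s : ℝ, 0 < s ∧ s ≤ 1 ∧ 10 * s ≤ τ := by
    refine ⟨min 1 (τ / 10), by positivity, min_le_left _ _, ?_⟩
    have := min_le_right 1 (τ / 10)
    linarith
  obtain ⟨δ, hδ, hpert⟩ := sq_perturb s hs
  let u := TopologicalSpace.denseSeq E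
  have hex : ∀ e : E, ∃ n, dist e (u n) < δ := fun e =>
    (TopologicalSpace.denseRange_denseSeq E).exists_dist_lt e hδ
  let ι : E → ℕ := fun e => Nat.find (hex e)
  have hι : Measurable ι := measurable_find hex fun k =>
    measurableSet_lt (measurable_id.dist measurable_const) measurable_const
  have hιd : ∀ e, ‖e - u (ι e)‖ < δ := fun e => by
    rw [← dist_eq_norm]; exact Nat.find_spec (hex e)
  let C : ℕ → ℕ → ℝ≥0∞ := fun k l => ENNReal.ofReal (‖u k - u l‖ ^ 2)
  let W : ℕ → ℝ≥0∞ := fun k => ENNReal.ofReal (2 * ‖u k‖ ^ 2)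
  have hC : ∀ k l, C k l ≤ W k + W l := by
    intro k l
    simp only [C, W]
    rw [← ENNReal.ofReal_add (by positivity) (by positivity)]
    apply ENNReal.ofReal_le_ofReal
    have := norm_sub_le (u k) (u l)
    have h0 := norm_nonneg (u k - u l)
    nlinarith [sq_nonneg (‖u k‖ - ‖u l‖)]
  have hW : ∀ k, W k ≠ ∞ := fun k => ENNReal.ofReal_ne_top
  let B : Z → ℝ≥0∞ := fun z => ENNReal.ofReal ((1 + s) * (c z + s) + 2 * s)
  have hBm : Measurable B := by fun_prop
  have hwm : ∀ (R : Kernel Z E) k, Measurable fun z => wt ι (R z) k := fun R k =>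
    R.measurable_coe (hι (measurableSet_singleton k))
  obtain ⟨m, hmm, hmsel⟩ := disc_selection (fun z => wt ι (P z)) (fun z => wt ι (Q z))
    (hwm P) (hwm Q) W C hC hW B hBm
  have hdm : Measurable (Function.uncurry fun z => dens ι (P z) (Q z) (m z)) := by
    have h1 : Measurable fun y : (ℕ × ℕ) × Z =>
        m y.2 y.1.1 y.1.2 / (wt ι (P y.2) y.1.1 * wt ι (Q y.2) y.1.2) := by
      refine measurable_from_prod_countable_right fun kl => ?_
      exact (hmm kl.1 kl.2).div ((hwm P kl.1).mul (hwm Q kl.2))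
    have h2 : Measurable fun y : Z × (E × E) => ((ι y.2.1, ι y.2.2), y.1) := by
      fun_prop
    exact h1.comp h2
  have hWfin : ∀ R : Measure E, IsProbabilityMeasure R → ∫⁻ e, ENNReal.ofReal (‖e‖ ^ 2) ∂(R) ≠ ∞ →
      ∑' k, W k * wt ι R k ≠ ∞ := by
    intro R _ hR
    rw [← lintegral_iota ι hι R W]
    have : ∫⁻ e, W (ι e) ∂(R) ≤ ∫⁻ e, (4 * ENNReal.ofReal (‖e‖ ^ 2) + ENNReal.ofReal (4 * δ ^ 2)) ∂(R) := by
      refine lintegral_mono fun e => ?_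
      simp only [W]
      rw [← ENNReal.ofReal_ofNat 4, ← ENNReal.ofReal_mul (by norm_num),
        ← ENNReal.ofReal_add (by positivity) (by positivity)]
      apply ENNReal.ofReal_le_ofReal
      have h1 := hιd e
      have h2 : ‖u (ι e)‖ ≤ ‖e‖ + δ := by
        have := norm_le_norm_add_norm_sub e (u (ι e))
        linarith
      nlinarith [sq_nonneg (‖e‖ - δ), norm_nonneg (u (ι e)), norm_nonneg e]
    refine ne_top_of_le_ne_top ?_ this
    rw [lintegral_add_right _ measurable_const, lintegral_const_mul' _ _ (by norm_num)]
    simp only [lintegral_const, measure_univ, mul_one]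
    exact ENNReal.add_ne_top.2 ⟨ENNReal.mul_ne_top (by norm_num) hR, ENNReal.ofReal_ne_top⟩
  have htri1 : ∀ e f : E, ‖e - f‖ ≤ ‖u (ι e) - u (ι f)‖ + 2 * δ := by
    intro e f
    have h := norm_add₃_le (a := e - u (ι e)) (b := u (ι e) - u (ι f)) (c := u (ι f) - f)
    rw [show e - u (ι e) + (u (ι e) - u (ι f)) + (u (ι f) - f) = e - f by abel,
      norm_sub_rev (u (ι f)) f] at h
    linarith [hιd e, hιd f]
  have htri2 : ∀ e f : E, ‖u (ι e) - u (ι f)‖ ≤ ‖e - f‖ + 2 * δ := by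
    intro e f
    have h := norm_add₃_le (a := u (ι e) - e) (b := e - f) (c := f - u (ι f))
    rw [show u (ι e) - e + (e - f) + (f - u (ι f)) = u (ι e) - u (ι f) by abel,
      norm_sub_rev (u (ι e)) e] at h
    linarith [hιd e, hιd f]
  have hpe : ∀ a b : ℝ, 0 ≤ a → 0 ≤ b → a ≤ b + 2 * δ → ENNReal.ofReal (a ^ 2) ≤
      ENNReal.ofReal (1 + s) * ENNReal.ofReal (b ^ 2) + ENNReal.ofReal s := by
    intro a b ha hb h
    rw [← ENNReal.ofReal_mul (by positivity), ← ENNReal.ofReal_add (by positivity) (by positivity)]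
    exact ENNReal.ofReal_le_ofReal (hpert a b ha hb h)
  refine ⟨(P ×ₖ Q).withDensity fun z => dens ι (P z) (Q z) (m z), fun z hcz hP hQ hρ => ?_⟩
  obtain ⟨ρ, hρ1, hρ2, hρc⟩ := hρ s hs
  have hρp : IsProbabilityMeasure ρ := by
    have : IsProbabilityMeasure (ρ.map Prod.fst) := by rw [hρ1]; infer_instance
    exact Measure.isProbabilityMeasure_of_map (f := Prod.fst)
  obtain ⟨m0, hm0, hm0c⟩ := disc_of_coupling ι hι (P z) (Q z) ρ hρ1 hρ2 C
  have hcost0 : ∑' k, ∑' l, C k l * m0 k l < B z := by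
    rw [hm0c]
    have h1 : ∫⁻ x, C (ι x.1) (ι x.2) ∂ρ ≤
        ∫⁻ x, (ENNReal.ofReal (1 + s) * ENNReal.ofReal (‖x.1 - x.2‖ ^ 2) + ENNReal.ofReal s) ∂ρ :=
      lintegral_mono fun x => hpe _ _ (norm_nonneg _) (norm_nonneg _) (htri2 _ _)
    refine h1.trans_lt ?_
    rw [lintegral_add_right _ measurable_const, lintegral_const_mul' _ _ ENNReal.ofReal_ne_top]
    simp only [lintegral_const, measure_univ, mul_one]
    refine lt_of_le_of_lt (add_le_add_left (mul_le_mul_right hρc _) _) ?_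
    rw [← ENNReal.ofReal_mul (by positivity), ← ENNReal.ofReal_add (by positivity) (by positivity)]
    simp only [B]
    exact (ENNReal.ofReal_lt_ofReal_iff (by positivity)).2 (by linarith)
  obtain ⟨hmC, hmcost⟩ := hmsel z (sum_wt ι hι _) (sum_wt ι hι _) (hWfin _ inferInstance hP)
    (hWfin _ inferInstance hQ) ⟨m0, hm0, hcost0⟩
  rw [Kernel.withDensity_apply _ hdm, Kernel.prod_apply]
  have hfst := lift_fst ι hι (P z) (Q z) (m z) hmC
  refine ⟨hfst, lift_snd ι hι (P z) (Q z) (m z) hmC, ?_⟩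
  have hcl := lift_cost ι hι (P z) (Q z) (m z) hmC C
  set κ := ((P z).prod (Q z)).withDensity (dens ι (P z) (Q z) (m z)) with hκ
  have hκp : IsProbabilityMeasure κ := by
    have : IsProbabilityMeasure (κ.map Prod.fst) := by rw [hfst]; infer_instance
    exact Measure.isProbabilityMeasure_of_map (f := Prod.fst)
  have h1 : ∫⁻ x, ENNReal.ofReal (‖x.1 - x.2‖ ^ 2) ∂κ ≤
      ∫⁻ x, (ENNReal.ofReal (1 + s) * C (ι x.1) (ι x.2) + ENNReal.ofReal s) ∂κ :=
    lintegral_mono fun x => hpe _ _ (norm_nonneg _) (norm_nonneg _) (htri1 _ _)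
  refine h1.trans ?_
  rw [lintegral_add_right _ measurable_const, lintegral_const_mul' _ _ ENNReal.ofReal_ne_top, hcl]
  simp only [lintegral_const, measure_univ, mul_one]
  refine le_trans (add_le_add_left (mul_le_mul_right hmcost _) _) ?_
  simp only [B]
  rw [← ENNReal.ofReal_mul (by positivity), ← ENNReal.ofReal_add (by positivity) (by positivity)]
  apply ENNReal.ofReal_le_ofReal
  have h5 : s * s ≤ s := by nlinarith
  have h6 : s * s * s ≤ s := by nlinarith
  have h7 : (s * s) * c z ≤ s * c z := by gcongr
  have h8 : (10 * s) * c z ≤ τ * c z := by gcongr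
  nlinarith [mul_nonneg hs.le hcz]

theorem W2sq_nonneg {d : ℕ} (μ ν : Measure (EuclideanSpace ℝ (Fin d))) : 0 ≤ W2sq μ ν := by
  apply Real.sInf_nonneg
  rintro r ⟨ξ, _, _, _, rfl⟩
  exact integral_nonneg fun p => by positivity

theorem W2sq_le {d : ℕ} (μ ν : Measure (EuclideanSpace ℝ (Fin d)))
    (ξ : Measure (EuclideanSpace ℝ (Fin d) × EuclideanSpace ℝ (Fin d))) [IsProbabilityMeasure ξ]
    (h1 : ξ.map Prod.fst = μ) (h2 : ξ.map Prod.snd = ν) :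
    W2sq μ ν ≤ ∫ p, ‖p.1 - p.2‖ ^ 2 ∂ξ := by
  refine csInf_le ⟨0, ?_⟩ ⟨ξ, inferInstance, h1, h2, rfl⟩
  rintro r ⟨ξ, _, _, _, rfl⟩
  exact integral_nonneg fun p => by positivity

theorem W2sq_eq_zero_of_not_prob {d : ℕ} (μ ν : Measure (EuclideanSpace ℝ (Fin d)))
    (h : μ = 0 ∨ ν = 0) : W2sq μ ν = 0 := by
  unfold W2sq
  convert Real.sInf_empty
  rw [Set.eq_empty_iff_forall_notMem]
  rintro r ⟨ξ, _, h1, h2, rfl⟩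
  have a1 : IsProbabilityMeasure μ := h1 ▸ Measure.isProbabilityMeasure_map measurable_fst.aemeasurable
  have a2 : IsProbabilityMeasure ν := h2 ▸ Measure.isProbabilityMeasure_map measurable_snd.aemeasurable
  rcases h with h | h
  · exact IsProbabilityMeasure.ne_zero μ h
  · exact IsProbabilityMeasure.ne_zero ν h

theorem fin_iff {E : Type*} [NormedAddCommGroup E] [MeasurableSpace E] [BorelSpace E]
    (μ : Measure E) :
    ∫⁻ e, ENNReal.ofReal (‖e‖ ^ 2) ∂μ ≠ ∞ ↔ Integrable (fun e => ‖e‖ ^ 2) μ :=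
  lintegral_ofReal_ne_top_iff_integrable (by fun_prop)
    (Filter.Eventually.of_forall fun e => by positivity)

theorem sq_tri {E : Type*} [NormedAddCommGroup E] (x y : E) :
    ‖x‖ ^ 2 ≤ 2 * ‖x - y‖ ^ 2 + 2 * ‖y‖ ^ 2 := by
  have h : ‖x‖ ≤ ‖x - y‖ + ‖y‖ := by simpa using norm_add_le (x - y) y
  nlinarith [sq_nonneg (‖x - y‖ - ‖y‖), norm_nonneg x]

theorem W2sq_le_zero_of_inf {d : ℕ} (μ ν : Measure (EuclideanSpace ℝ (Fin d)))
    [IsProbabilityMeasure μ] [IsProbabilityMeasure ν]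
    (h : ¬ Integrable (fun e => ‖e‖ ^ 2) μ ∨ ¬ Integrable (fun e => ‖e‖ ^ 2) ν) :
    W2sq μ ν ≤ 0 := by
  refine (W2sq_le μ ν (μ.prod ν) (by simp) (by simp)).trans (le_of_eq ?_)
  apply integral_undef
  intro hi
  rcases h with h | h
  · obtain ⟨y, hy⟩ := hi.prod_left_ae.exists
    refine h (((hy.const_mul 2).add (integrable_const (2 * ‖y‖ ^ 2))).mono' (by fun_prop) ?_)
    refine Filter.Eventually.of_forall fun x => ?_
    rw [Real.norm_of_nonneg (by positivity)]
    exact sq_tri x y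
  · obtain ⟨y, hy⟩ := hi.prod_right_ae.exists
    refine h (((hy.const_mul 2).add (integrable_const (2 * ‖y‖ ^ 2))).mono' (by fun_prop) ?_)
    refine Filter.Eventually.of_forall fun x => ?_
    rw [Real.norm_of_nonneg (by positivity)]
    have := sq_tri x y
    rwa [norm_sub_rev] at this

theorem memLp_of_push {d : ℕ} (η : Measure (EuclideanSpace ℝ (Fin d))) [IsProbabilityMeasure η]
    (β : ℝ) (hβ : β ≠ 0) (u : EuclideanSpace ℝ (Fin d))
    (h : ∫⁻ e, ENNReal.ofReal (‖e‖ ^ 2) ∂(η.map fun e => u - β • e) ≠ ∞) :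
    MemLp (fun e : EuclideanSpace ℝ (Fin d) => e) 2 η := by
  rw [fin_iff, integrable_map_measure (by fun_prop) (by fun_prop)] at h
  have h1 : MemLp (fun e : EuclideanSpace ℝ (Fin d) => u - β • e) 2 η :=
    (memLp_two_iff_integrable_sq_norm (by fun_prop)).2 h
  have h2 := ((memLp_const (p := 2) (μ := η) u).sub h1).const_smul β⁻¹
  have he : (β⁻¹ • ((fun _ => u) - fun e : EuclideanSpace ℝ (Fin d) => u - β • e)) =
      fun e : EuclideanSpace ℝ (Fin d) => e := by
    funext e
    simp [smul_smul, hβ]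
  rw [he] at h2
  exact h2

theorem push_coupling {d : ℕ} (η₁ η₂ : Measure (EuclideanSpace ℝ (Fin d)))
    [IsProbabilityMeasure η₁] [IsProbabilityMeasure η₂]
    (hc1 : ∫ e, e ∂η₁ = 0) (hc2 : ∫ e, e ∂η₂ = 0) (β : ℝ) (hβ : β ≠ 0)
    (u v : EuclideanSpace ℝ (Fin d))
    (hf1 : ∫⁻ e, ENNReal.ofReal (‖e‖ ^ 2) ∂(η₁.map fun e => u - β • e) ≠ ∞)
    (hf2 : ∫⁻ e, ENNReal.ofReal (‖e‖ ^ 2) ∂(η₂.map fun e => v - β • e) ≠ ∞)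
    (r : ℝ) (hW : W2sq η₁ η₂ ≤ r) (σ : ℝ) (hσ : 0 < σ) :
    ∃ ρ : Measure (EuclideanSpace ℝ (Fin d) × EuclideanSpace ℝ (Fin d)),
      ρ.map Prod.fst = (η₁.map fun e => u - β • e) ∧
      ρ.map Prod.snd = (η₂.map fun e => v - β • e) ∧
      ∫⁻ x, ENNReal.ofReal (‖x.1 - x.2‖ ^ 2) ∂ρ ≤
        ENNReal.ofReal (‖u - v‖ ^ 2 + β ^ 2 * r + σ) := by
  have m1 := memLp_of_push η₁ β hβ u hf1
  have m2 := memLp_of_push η₂ β hβ v hf2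
  have hβ2 : 0 < β ^ 2 := by positivity
  have hlt : W2sq η₁ η₂ < r + σ / β ^ 2 := by
    have : 0 < σ / β ^ 2 := by positivity
    linarith
  unfold W2sq at hlt
  obtain ⟨_, ⟨ξ, hξ, h1, h2, rfl⟩, hcost⟩ := exists_lt_of_csInf_lt
    (by exact ⟨_, η₁.prod η₂, inferInstance, by simp, by simp, rfl⟩) hlt
  have n1 : MemLp (fun p : EuclideanSpace ℝ (Fin d) × EuclideanSpace ℝ (Fin d) => p.1) 2 ξ := by
    rw [← h1] at m1
    exact m1.comp_of_map measurable_fst.aemeasurable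
  have n2 : MemLp (fun p : EuclideanSpace ℝ (Fin d) × EuclideanSpace ℝ (Fin d) => p.2) 2 ξ := by
    rw [← h2] at m2
    exact m2.comp_of_map measurable_snd.aemeasurable
  have n := n1.sub n2
  have i1 : ∫ p, p.1 ∂ξ = 0 := by
    rw [← hc1, ← h1, integral_map measurable_fst.aemeasurable (by fun_prop)]
  have i2 : ∫ p, p.2 ∂ξ = 0 := by
    rw [← hc2, ← h2, integral_map measurable_snd.aemeasurable (by fun_prop)]
  have hdint : Integrable (fun p : EuclideanSpace ℝ (Fin d) × EuclideanSpace ℝ (Fin d) =>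
      p.1 - p.2) ξ := n.integrable (by norm_num)
  have i3 : ∫ p, (p.1 - p.2) ∂ξ = 0 := by
    rw [integral_sub (n1.integrable (by norm_num)) (n2.integrable (by norm_num)), i1, i2, sub_zero]
  have hsq : Integrable (fun p : EuclideanSpace ℝ (Fin d) × EuclideanSpace ℝ (Fin d) =>
      ‖p.1 - p.2‖ ^ 2) ξ := (memLp_two_iff_integrable_sq_norm (by fun_prop)).1 n
  have hinn : Integrable (fun p : EuclideanSpace ℝ (Fin d) × EuclideanSpace ℝ (Fin d) =>
      ⟪u - v, p.1 - p.2⟫) ξ := hdint.const_inner (u - v)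
  have hexp : ∀ p : EuclideanSpace ℝ (Fin d) × EuclideanSpace ℝ (Fin d),
      ‖(u - β • p.1) - (v - β • p.2)‖ ^ 2 =
        ‖u - v‖ ^ 2 - 2 * β * ⟪u - v, p.1 - p.2⟫ + β ^ 2 * ‖p.1 - p.2‖ ^ 2 := by
    intro p
    rw [show (u - β • p.1) - (v - β • p.2) = (u - v) - β • (p.1 - p.2) by module,
      norm_sub_sq_real, inner_smul_right, norm_smul, mul_pow, Real.norm_eq_abs, sq_abs]
    ring
  have hI : Integrable (fun p : EuclideanSpace ℝ (Fin d) × EuclideanSpace ℝ (Fin d) =>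
      ‖u - v‖ ^ 2 - 2 * β * ⟪u - v, p.1 - p.2⟫ + β ^ 2 * ‖p.1 - p.2‖ ^ 2) ξ :=
    ((integrable_const _).sub (hinn.const_mul _)).add (hsq.const_mul _)
  refine ⟨ξ.map fun p => (u - β • p.1, v - β • p.2), ?_, ?_, ?_⟩
  · rw [Measure.map_map measurable_fst (by fun_prop), ← h1,
      Measure.map_map (by fun_prop) measurable_fst]
    rfl
  · rw [Measure.map_map measurable_snd (by fun_prop), ← h2,
      Measure.map_map (by fun_prop) measurable_snd]
    rfl
  · rw [lintegral_map (by fun_prop) (by fun_prop)]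
    simp only [hexp]
    rw [← ofReal_integral_eq_lintegral_ofReal hI
      (Filter.Eventually.of_forall fun p => by simp only [← hexp]; positivity)]
    apply ENNReal.ofReal_le_ofReal
    have hs1 : Integrable (fun p : EuclideanSpace ℝ (Fin d) × EuclideanSpace ℝ (Fin d) =>
        ‖u - v‖ ^ 2 - 2 * β * ⟪u - v, p.1 - p.2⟫) ξ :=
      (integrable_const _).sub (hinn.const_mul _)
    rw [integral_add hs1 (hsq.const_mul _),
      integral_sub (integrable_const _) (hinn.const_mul _), integral_const_mul, integral_const_mul,
      integral_inner hdint, i3]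
    simp only [integral_const, probReal_univ, one_smul, inner_zero_right, mul_zero, sub_zero]
    have := mul_le_mul_of_nonneg_left hcost.le hβ2.le
    rw [mul_add, mul_div_cancel₀ _ hβ2.ne'] at this
    linarith

theorem markov_version {X Y : Type*} [MeasurableSpace X] [MeasurableSpace Y] [Nonempty Y]
    (F : X → Measure Y) (hF : ∀ x, IsProbabilityMeasure (F x)) (ν : Measure X)
    (h : AEMeasurable F ν) :
    ∃ κ : Kernel X Y, IsMarkovKernel κ ∧ F =ᵐ[ν] κ := by
  classical
  have hS : MeasurableSet {x | h.mk F x Set.univ = 1} :=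
    (Measure.measurable_coe MeasurableSet.univ).comp h.measurable_mk (measurableSet_singleton 1)
  refine ⟨⟨fun x => if h.mk F x Set.univ = 1 then h.mk F x else Measure.dirac (Classical.arbitrary Y),
    Measurable.ite hS h.measurable_mk measurable_const⟩, ⟨fun x => ?_⟩, ?_⟩
  · change IsProbabilityMeasure (if _ then _ else _)
    split_ifs with hx
    · exact ⟨hx⟩
    · infer_instance
  · filter_upwards [h.ae_eq_mk] with x hx
    change F x = if _ then _ else _
    rw [if_pos, hx]
    rw [← hx]
    exact measure_univ

theorem mixture_bound {d : ℕ} (κ₁ κ₂ : Kernel (EuclideanSpace ℝ (Fin d)) (EuclideanSpace ℝ (Fin d)))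
    [IsMarkovKernel κ₁] [IsMarkovKernel κ₂]
    (ν₁ ν₂ : Measure (EuclideanSpace ℝ (Fin d)))
    [IsProbabilityMeasure ν₁] [IsProbabilityMeasure ν₂]
    (hm₁ : Integrable (fun x => ‖x‖ ^ 2) ν₁)
    (hm₂ : Integrable (fun x => ‖x‖ ^ 2) ν₂)
    (hn₁ : Integrable (fun x => ‖x‖ ^ 2) (ν₁.bind κ₁))
    (hn₂ : Integrable (fun x => ‖x‖ ^ 2) (ν₂.bind κ₂))
    (G₁ G₂ : Set (EuclideanSpace ℝ (Fin d))) (hG₁ : ∀ᵐ x ∂ν₁, x ∈ G₁) (hG₂ : ∀ᵐ x ∂ν₂, x ∈ G₂)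
    (C : ℝ) (hC : 0 ≤ C)
    (hco : ∀ x ∈ G₁, ∀ y ∈ G₂, ∫⁻ e, ENNReal.ofReal (‖e‖ ^ 2) ∂(κ₁ x) ≠ ∞ →
      ∫⁻ e, ENNReal.ofReal (‖e‖ ^ 2) ∂(κ₂ y) ≠ ∞ → ∀ σ : ℝ, 0 < σ →
      ∃ ρ : Measure (EuclideanSpace ℝ (Fin d) × EuclideanSpace ℝ (Fin d)),
      ρ.map Prod.fst = κ₁ x ∧ ρ.map Prod.snd = κ₂ y ∧
      ∫⁻ x, ENNReal.ofReal (‖x.1 - x.2‖ ^ 2) ∂ρ ≤ ENNReal.ofReal (C * ‖x - y‖ ^ 2 + σ)) :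
    W2sq (ν₁.bind κ₁) (ν₂.bind κ₂) ≤ C * W2sq ν₁ ν₂ := by
  have main : ∀ ξ : Measure (EuclideanSpace ℝ (Fin d) × EuclideanSpace ℝ (Fin d)),
      IsProbabilityMeasure ξ → ξ.map Prod.fst = ν₁ → ξ.map Prod.snd = ν₂ → ∀ τ : ℝ, 0 < τ →
      W2sq (ν₁.bind κ₁) (ν₂.bind κ₂) ≤ (1 + τ) * (C * ∫ p, ‖p.1 - p.2‖ ^ 2 ∂ξ) + τ := by
    intro ξ _ h1 h2 τ hτ
    have hI : Integrable (fun p : EuclideanSpace ℝ (Fin d) × EuclideanSpace ℝ (Fin d) =>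
        ‖p.1 - p.2‖ ^ 2) ξ := by
      rw [← h1, integrable_map_measure (by fun_prop) (by fun_prop)] at hm₁
      rw [← h2, integrable_map_measure (by fun_prop) (by fun_prop)] at hm₂
      refine ((hm₁.const_mul 2).add (hm₂.const_mul 2)).mono' (by fun_prop) ?_
      refine Filter.Eventually.of_forall fun x => ?_
      rw [Real.norm_of_nonneg (by positivity)]
      simp only [Pi.add_apply, Function.comp_apply]
      have := norm_sub_le x.1 x.2
      nlinarith [sq_nonneg (‖x.1‖ - ‖x.2‖), norm_nonneg (x.1 - x.2)]
    obtain ⟨K, hK⟩ := coupling_kernel (κ₁.comap Prod.fst measurable_fst)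
      (κ₂.comap Prod.snd measurable_snd) (fun z => C * ‖z.1 - z.2‖ ^ 2) (by fun_prop) τ hτ
    have hfin : ∀ (κ : Kernel (EuclideanSpace ℝ (Fin d)) (EuclideanSpace ℝ (Fin d)))
        (ν : Measure (EuclideanSpace ℝ (Fin d))), Integrable (fun x => ‖x‖ ^ 2) (ν.bind κ) →
        ∀ᵐ x ∂ν, ∫⁻ e, ENNReal.ofReal (‖e‖ ^ 2) ∂(κ x) ≠ ∞ := by
      intro κ ν hn
      rw [← fin_iff, Measure.lintegral_bind κ.measurable.aemeasurable (by fun_prop)] at hn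
      have hmeas : Measurable fun x => ∫⁻ e, ENNReal.ofReal (‖e‖ ^ 2) ∂(κ x) :=
        Measurable.lintegral_kernel (by fun_prop)
      filter_upwards [ae_lt_top hmeas hn] with x hx using hx.ne
    have g1 : ∀ᵐ x ∂ν₁, x ∈ G₁ ∧ ∫⁻ e, ENNReal.ofReal (‖e‖ ^ 2) ∂(κ₁ x) ≠ ∞ :=
      hG₁.and (hfin κ₁ ν₁ hn₁)
    have g2 : ∀ᵐ x ∂ν₂, x ∈ G₂ ∧ ∫⁻ e, ENNReal.ofReal (‖e‖ ^ 2) ∂(κ₂ x) ≠ ∞ :=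
      hG₂.and (hfin κ₂ ν₂ hn₂)
    rw [← h1] at g1
    rw [← h2] at g2
    have g1' := ae_of_ae_map measurable_fst.aemeasurable g1
    have g2' := ae_of_ae_map measurable_snd.aemeasurable g2
    have hKae : ∀ᵐ z ∂ξ, (K z).map Prod.fst = κ₁ z.1 ∧ (K z).map Prod.snd = κ₂ z.2 ∧
        ∫⁻ x, ENNReal.ofReal (‖x.1 - x.2‖ ^ 2) ∂(K z) ≤
          ENNReal.ofReal ((1 + τ) * (C * ‖z.1 - z.2‖ ^ 2) + τ) := by
      filter_upwards [g1', g2'] with z hz1 hz2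
      exact hK z (by positivity) hz1.2 hz2.2 (hco _ hz1.1 _ hz2.1 hz1.2 hz2.2)
    have k1 : (ξ.bind K).map Prod.fst = ν₁.bind κ₁ := by
      ext A hA
      rw [Measure.map_apply measurable_fst hA, Measure.bind_apply (measurable_fst hA)
        K.measurable.aemeasurable, Measure.bind_apply hA κ₁.measurable.aemeasurable, ← h1,
        lintegral_map (κ₁.measurable_coe hA) measurable_fst]
      refine lintegral_congr_ae ?_
      filter_upwards [hKae] with z hz
      rw [← hz.1, Measure.map_apply measurable_fst hA]
    have k2 : (ξ.bind K).map Prod.snd = ν₂.bind κ₂ := by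
      ext A hA
      rw [Measure.map_apply measurable_snd hA, Measure.bind_apply (measurable_snd hA)
        K.measurable.aemeasurable, Measure.bind_apply hA κ₂.measurable.aemeasurable, ← h2,
        lintegral_map (κ₂.measurable_coe hA) measurable_snd]
      refine lintegral_congr_ae ?_
      filter_upwards [hKae] with z hz
      rw [← hz.2.1, Measure.map_apply measurable_snd hA]
    have hprob : IsProbabilityMeasure (ξ.bind K) := by
      have : IsProbabilityMeasure ((ξ.bind K).map Prod.fst) := by rw [k1]; infer_instance
      exact Measure.isProbabilityMeasure_of_map (f := Prod.fst)
    refine (W2sq_le _ _ (ξ.bind K) k1 k2).trans ?_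
    rw [integral_eq_lintegral_of_nonneg_ae (Filter.Eventually.of_forall fun p => by positivity)
      (by fun_prop)]
    have hJ : Integrable (fun z : EuclideanSpace ℝ (Fin d) × EuclideanSpace ℝ (Fin d) =>
        (1 + τ) * (C * ‖z.1 - z.2‖ ^ 2) + τ) ξ :=
      ((hI.const_mul C).const_mul _).add (integrable_const _)
    have hIeq : ∫ z, ((1 + τ) * (C * ‖z.1 - z.2‖ ^ 2) + τ) ∂ξ =
        (1 + τ) * (C * ∫ p, ‖p.1 - p.2‖ ^ 2 ∂ξ) + τ := by
      rw [integral_add ((hI.const_mul C).const_mul _) (integrable_const _), integral_const_mul,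
        integral_const_mul]
      simp
    rw [← hIeq]
    have hnn : 0 ≤ ∫ z, ((1 + τ) * (C * ‖z.1 - z.2‖ ^ 2) + τ) ∂ξ :=
      integral_nonneg fun z => by positivity
    refine ENNReal.toReal_le_of_le_ofReal hnn ?_
    rw [Measure.lintegral_bind K.measurable.aemeasurable (by fun_prop),
      ofReal_integral_eq_lintegral_ofReal hJ (Filter.Eventually.of_forall fun z => by positivity)]
    refine lintegral_mono_ae ?_
    filter_upwards [hKae] with z hz using hz.2.2
  have main' : ∀ ξ : Measure (EuclideanSpace ℝ (Fin d) × EuclideanSpace ℝ (Fin d)),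
      IsProbabilityMeasure ξ → ξ.map Prod.fst = ν₁ → ξ.map Prod.snd = ν₂ →
      W2sq (ν₁.bind κ₁) (ν₂.bind κ₂) ≤ C * ∫ p, ‖p.1 - p.2‖ ^ 2 ∂ξ := by
    intro ξ hξ h1 h2
    refine le_of_forall_pos_le_add fun ε hε => ?_
    have hnn : 0 ≤ C * ∫ p, ‖p.1 - p.2‖ ^ 2 ∂ξ :=
      mul_nonneg hC (integral_nonneg fun z => by positivity)
    set I := C * ∫ p, ‖p.1 - p.2‖ ^ 2 ∂ξ
    refine (main ξ hξ h1 h2 (ε / (I + 1)) (by positivity)).trans (le_of_eq ?_)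
    have : I + 1 ≠ 0 := by positivity
    change (1 + ε / (I + 1)) * I + ε / (I + 1) = I + ε
    field_simp
    ring
  rcases eq_or_lt_of_le hC with h0 | h0
  · have := main' (ν₁.prod ν₂) inferInstance (by simp) (by simp)
    rw [← h0] at this ⊢
    simpa using this
  · rw [← div_le_iff₀' h0]
    refine le_csInf ⟨_, ν₁.prod ν₂, inferInstance, by simp, by simp, rfl⟩ ?_
    rintro r ⟨ξ, hξ, h1, h2, rfl⟩
    rw [div_le_iff₀' h0]
    exact main' ξ hξ h1 h2

theorem wasserstein_contraction {d : ℕ}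
    (Lf : EuclideanSpace ℝ (Fin d) → ℝ)
    (g : EuclideanSpace ℝ (Fin d) → EuclideanSpace ℝ (Fin d))
    (mu Lc LW : ℝ) (hmu : 0 < mu) (hmuLc : mu ≤ Lc) (hLW : 0 ≤ LW)
    (hsc : ∀ θ θ' : EuclideanSpace ℝ (Fin d),
      mu / 2 * ‖θ - θ'‖ ^ 2 ≤ Lf θ - Lf θ' - ⟪g θ', θ - θ'⟫)
    (hsm : ∀ θ θ' : EuclideanSpace ℝ (Fin d),
      Lf θ - Lf θ' - ⟪g θ', θ - θ'⟫ ≤ Lc / 2 * ‖θ - θ'‖ ^ 2)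
    (η : EuclideanSpace ℝ (Fin d) → Measure (EuclideanSpace ℝ (Fin d)))
    (hηprob : ∀ x, IsProbabilityMeasure (η x))
    (hηcent : ∀ x, ∫ e, e ∂(η x) = 0)
    (hηW : ∀ x y, W2sq (η x) (η y) ≤ LW * ‖x - y‖ ^ 2)
    (β : ℝ) (hβ0 : 0 < β) (hβ : β ≤ 2 / (mu + Lc))
    (ν₁ ν₂ : Measure (EuclideanSpace ℝ (Fin d)))
    [IsProbabilityMeasure ν₁] [IsProbabilityMeasure ν₂]
    (hm₁ : Integrable (fun x => ‖x‖ ^ 2) ν₁)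
    (hm₂ : Integrable (fun x => ‖x‖ ^ 2) ν₂) :
    W2sq (sgdStep β g η ν₁) (sgdStep β g η ν₂) ≤
      ((1 - β * mu) ^ 2 + β ^ 2 * LW) * W2sq ν₁ ν₂ := by
  have hCnn : 0 ≤ (1 - β * mu) ^ 2 + β ^ 2 * LW := by positivity
  have hR : 0 ≤ ((1 - β * mu) ^ 2 + β ^ 2 * LW) * W2sq ν₁ ν₂ :=
    mul_nonneg hCnn (W2sq_nonneg _ _)
  have hform : (fun x => (η x).map (fun e => x - β • (g x + e))) =
      fun x => (η x).map (fun e => (x - β • g x) - β • e) := by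
    funext x
    congr 1
    funext e
    module
  unfold sgdStep
  rw [hform]
  set F : EuclideanSpace ℝ (Fin d) → Measure (EuclideanSpace ℝ (Fin d)) :=
    fun x => (η x).map (fun e => (x - β • g x) - β • e) with hF
  have hFp : ∀ x, IsProbabilityMeasure (F x) := fun x =>
    Measure.isProbabilityMeasure_map (by fun_prop)
  have hbad : ∀ ν : Measure (EuclideanSpace ℝ (Fin d)), ¬ AEMeasurable F ν → ν.bind F = 0 := by
    intro ν h
    rw [Measure.bind, Measure.map_of_not_aemeasurable h, Measure.join_zero]
  by_cases hA1 : AEMeasurable F ν₁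
  swap
  · rw [W2sq_eq_zero_of_not_prob _ _ (Or.inl (hbad ν₁ hA1))]
    exact hR
  by_cases hA2 : AEMeasurable F ν₂
  swap
  · rw [W2sq_eq_zero_of_not_prob _ _ (Or.inr (hbad ν₂ hA2))]
    exact hR
  obtain ⟨κ₁, hκ₁, hae1⟩ := markov_version F hFp ν₁ hA1
  obtain ⟨κ₂, hκ₂, hae2⟩ := markov_version F hFp ν₂ hA2
  rw [Measure.bind_congr_right hae1, Measure.bind_congr_right hae2]
  by_cases hn1 : Integrable (fun e => ‖e‖ ^ 2) (ν₁.bind κ₁)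
  swap
  · exact (W2sq_le_zero_of_inf _ _ (Or.inl hn1)).trans hR
  by_cases hn2 : Integrable (fun e => ‖e‖ ^ 2) (ν₂.bind κ₂)
  swap
  · exact (W2sq_le_zero_of_inf _ _ (Or.inr hn2)).trans hR
  refine mixture_bound κ₁ κ₂ ν₁ ν₂ hm₁ hm₂ hn1 hn2 {x | F x = κ₁ x} {x | F x = κ₂ x} hae1 hae2
    _ hCnn ?_
  intro x hx y hy hfx hfy σ hσ
  have hx' : F x = κ₁ x := hx
  have hy' : F y = κ₂ y := hy
  rw [← hx'] at hfx ⊢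
  rw [← hy'] at hfy ⊢
  have := hηprob x
  have := hηprob y
  obtain ⟨ρ, h1, h2, h3⟩ := push_coupling (η x) (η y) (hηcent x) (hηcent y) β hβ0.ne'
    (x - β • g x) (y - β • g y) hfx hfy _ (hηW x y) σ hσ
  refine ⟨ρ, h1, h2, h3.trans (ENNReal.ofReal_le_ofReal ?_)⟩
  have := grad_contr Lf g mu Lc hmuLc hmu hsc hsm β hβ0 hβ x y
  nlinarith
end

section
/- Let (θ_t) be the SGD chain with linear gradient ∇L(θ) = Σ(θ − θ*) (Σ symmetric positive definite with spectrum in [μ, L]), step size β ≤ 2/(μ+L) satisfying the Wasserstein contraction with constant α_W = √((1−βμ)² + β²L_W) < 1, initialized at θ₀ ∼ ν ∈ P₂(ℝ^d), and let π be the invariant measure. Then for all 0 ≤ i ≤ j, E⟨θ_i − θ*, θ_j − θ*⟩ ≤ 2(1−βμ)^{j−i}·( α_W^{2i}·W₂²(ν, π) + Var_π(θ) ), where Var_π(θ) = E_{θ∼π}‖θ − θ*‖². -/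
open MeasureTheory Real
open scoped RealInnerProductSpace

theorem sym_norm_bound {d : ℕ}
    (T : EuclideanSpace ℝ (Fin d) →ₗ[ℝ] EuclideanSpace ℝ (Fin d)) (c : ℝ) (hc : 0 ≤ c)
    (hsym : ∀ x y, ⟪T x, y⟫ = ⟪x, T y⟫)
    (h₁ : ∀ x, -(c * ‖x‖ ^ 2) ≤ ⟪x, T x⟫) (h₂ : ∀ x, ⟪x, T x⟫ ≤ c * ‖x‖ ^ 2)
    (x : EuclideanSpace ℝ (Fin d)) : ‖T x‖ ≤ c * ‖x‖ := by
  have key : ∀ y, 4 * ⟪T x, y⟫ ≤ c * (2 * ‖x‖ ^ 2 + 2 * ‖y‖ ^ 2) := by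
    intro y
    have a := h₂ (x + y)
    have b := h₁ (x - y)
    have e1 := parallelogram_law_with_norm ℝ x y
    have e2 : ⟪x + y, T (x + y)⟫ - ⟪x - y, T (x - y)⟫ = 4 * ⟪T x, y⟫ := by
      simp only [map_add, map_sub, inner_add_left, inner_add_right, inner_sub_left,
        inner_sub_right]
      rw [← hsym x y, real_inner_comm (T x) y]
      ring
    have e3 : ‖x + y‖ ^ 2 + ‖x - y‖ ^ 2 = 2 * ‖x‖ ^ 2 + 2 * ‖y‖ ^ 2 := by nlinarith
    rw [← e3, ← e2]
    linarith
  rcases hc.eq_or_lt with h0 | hpos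
  · subst h0
    have := key (T x)
    rw [real_inner_self_eq_norm_sq] at this
    have h : ‖T x‖ ^ 2 ≤ 0 := by linarith
    have : ‖T x‖ = 0 := by
      have := le_antisymm h (sq_nonneg _)
      exact pow_eq_zero_iff (two_ne_zero) |>.1 this
    simp [this]
  · have := key (c⁻¹ • T x)
    rw [real_inner_smul_right, real_inner_self_eq_norm_sq, norm_smul, norm_inv,
      Real.norm_of_nonneg hc] at this
    have h : ‖T x‖ ^ 2 ≤ (c * ‖x‖) ^ 2 := by
      have h2 := mul_le_mul_of_nonneg_left this hc
      have e1 : c * (4 * (c⁻¹ * ‖T x‖ ^ 2)) = 4 * ‖T x‖ ^ 2 := by field_simp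
      have e2 : c * (c * (2 * ‖x‖ ^ 2 + 2 * (c⁻¹ * ‖T x‖) ^ 2))
          = 2 * (c * ‖x‖) ^ 2 + 2 * ‖T x‖ ^ 2 := by field_simp
      rw [e1, e2] at h2
      linarith
    exact (le_abs_self _).trans (abs_le_of_sq_le_sq h (by positivity))

theorem second_moment_le {d : ℕ} (μ ν : Measure (EuclideanSpace ℝ (Fin d)))
    [IsProbabilityMeasure μ] [IsProbabilityMeasure ν] (a : EuclideanSpace ℝ (Fin d))
    (hμ : Integrable (fun x => ‖x - a‖ ^ 2) μ) (hν : Integrable (fun x => ‖x - a‖ ^ 2) ν) :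
    ∫ x, ‖x - a‖ ^ 2 ∂μ ≤ 2 * (W2sq μ ν + ∫ x, ‖x - a‖ ^ 2 ∂ν) := by
  have : (∫ x, ‖x - a‖ ^ 2 ∂μ) / 2 - ∫ x, ‖x - a‖ ^ 2 ∂ν ≤ W2sq μ ν := by
    unfold W2sq
    apply le_csInf
    · exact ⟨_, μ.prod ν, inferInstance, by simp, by simp, rfl⟩
    · rintro r ⟨ξ, hξ, rfl, rfl, rfl⟩
      have i1 : Integrable (fun p : EuclideanSpace ℝ (Fin d) × EuclideanSpace ℝ (Fin d) =>
          ‖p.1 - a‖ ^ 2) ξ := hμ.comp_measurable measurable_fst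
      have i2 : Integrable (fun p : EuclideanSpace ℝ (Fin d) × EuclideanSpace ℝ (Fin d) =>
          ‖p.2 - a‖ ^ 2) ξ := hν.comp_measurable measurable_snd
      have pt : ∀ u v : EuclideanSpace ℝ (Fin d), ‖u + v‖ ^ 2 ≤ 2 * ‖u‖ ^ 2 + 2 * ‖v‖ ^ 2 := by
        intro u v
        have := parallelogram_law_with_norm ℝ u v
        nlinarith [mul_self_nonneg ‖u - v‖]
      have i3 : Integrable (fun p : EuclideanSpace ℝ (Fin d) × EuclideanSpace ℝ (Fin d) =>
          ‖p.1 - p.2‖ ^ 2) ξ := by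
        refine ((i1.const_mul 2).add (i2.const_mul 2)).mono' (by fun_prop) ?_
        refine ae_of_all _ fun p => ?_
        rw [Real.norm_of_nonneg (by positivity)]
        have := pt (p.1 - a) (-(p.2 - a))
        rw [norm_neg] at this
        simpa using this
      rw [integral_map (by fun_prop) (by fun_prop), integral_map (by fun_prop) (by fun_prop)]
      have h := integral_mono (μ := ξ) i1 ((i3.const_mul 2).add (i2.const_mul 2)) (fun p => by
        have := pt (p.1 - p.2) (p.2 - a)
        simpa using this)
      simp only [Pi.add_apply] at h
      rw [integral_add (i3.const_mul 2) (i2.const_mul 2), integral_const_mul,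
        integral_const_mul] at h
      linarith
  linarith

theorem int_inner {d : ℕ} {Ω : Type*} {m0 : MeasurableSpace Ω} {P : Measure Ω}
    {X Y : Ω → EuclideanSpace ℝ (Fin d)} (hX : MemLp X 2 P) (hY : MemLp Y 2 P) :
    Integrable (fun ω => ⟪X ω, Y ω⟫) P :=
  (hX.norm.integrable_mul hY.norm).mono' (hX.1.inner hY.1)
    (ae_of_all _ fun ω => norm_inner_le_norm (X ω) (Y ω))

theorem orth_noise {d : ℕ} {Ω : Type*} {m m0 : MeasurableSpace Ω}
    (P : Measure Ω) [IsProbabilityMeasure P] (hm : m ≤ m0)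
    (X e : Ω → EuclideanSpace ℝ (Fin d)) (hX : Measurable[m] X)
    (hX2 : MemLp X 2 P) (he : MemLp e 2 P)
    (hc : ∀ u : EuclideanSpace ℝ (Fin d), P[fun ω => ⟪u, e ω⟫ | m] =ᵐ[P] 0) :
    ∫ ω, ⟪X ω, e ω⟫ ∂P = 0 := by
  let b := EuclideanSpace.basisFun (Fin d) ℝ
  have hXk : ∀ k, MemLp (fun ω => ⟪X ω, b k⟫) 2 P := fun k => hX2.inner_const (b k)
  have hek : ∀ k, MemLp (fun ω => ⟪b k, e ω⟫) 2 P := fun k => he.const_inner (b k)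
  have hint : ∀ k, Integrable (fun ω => ⟪X ω, b k⟫ * ⟪b k, e ω⟫) P :=
    fun k => (hXk k).integrable_mul (hek k)
  have e0 : ∀ ω, ⟪X ω, e ω⟫ = ∑ k, ⟪X ω, b k⟫ * ⟪b k, e ω⟫ := fun ω =>
    (b.sum_inner_mul_inner (X ω) (e ω)).symm
  simp_rw [e0]
  rw [integral_finsetSum _ (fun k _ => hint k)]
  refine Finset.sum_eq_zero fun k _ => ?_
  rw [← integral_condExp hm]
  have hXm : StronglyMeasurable[m] (fun ω => ⟪X ω, b k⟫) := by
    have : Measurable (fun x : EuclideanSpace ℝ (Fin d) => ⟪x, b k⟫) := by fun_prop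
    exact (this.comp hX).stronglyMeasurable
  have h1 := condExp_mul_of_stronglyMeasurable_left (μ := P) hXm (hint k)
    ((hek k).integrable (by norm_num))
  have h2 : P[fun ω => ⟪X ω, b k⟫ * ⟪b k, e ω⟫ | m] =ᵐ[P] 0 := by
    filter_upwards [h1, hc (b k)] with ω a1 a2
    have a3 : (P[fun ω => ⟪X ω, b k⟫ * ⟪b k, e ω⟫ | m]) ω
      = ⟪X ω, b k⟫ * (P[fun ω => ⟪b k, e ω⟫ | m]) ω := a1
    rw [a3, a2]; simp
  rw [integral_congr_ae h2]; simp

theorem geometric_covariance_decay {d : ℕ} {Ω : Type*} [MeasurableSpace Ω]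
    (P : Measure Ω) [IsProbabilityMeasure P]
    (Sl : EuclideanSpace ℝ (Fin d) →ₗ[ℝ] EuclideanSpace ℝ (Fin d))
    (mu Lc LW β : ℝ) (θstar : EuclideanSpace ℝ (Fin d))
    (hmu : 0 < mu) (hmuLc : mu ≤ Lc) (hLW : 0 ≤ LW)
    -- Σ symmetric with spectrum in [μ, L]
    (hsym : ∀ x y, ⟪Sl x, y⟫ = ⟪x, Sl y⟫)
    (hspec₁ : ∀ x, mu * ‖x‖ ^ 2 ≤ ⟪x, Sl x⟫)
    (hspec₂ : ∀ x, ⟪x, Sl x⟫ ≤ Lc * ‖x‖ ^ 2)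
    (hβ0 : 0 < β) (hβ : β ≤ 2 / (mu + Lc))
    (hαW : Real.sqrt ((1 - β * mu) ^ 2 + β ^ 2 * LW) < 1)
    (θ ε : ℕ → Ω → EuclideanSpace ℝ (Fin d))
    (hθmeas : ∀ t, Measurable (θ t)) (hεmeas : ∀ t, Measurable (ε t))
    -- SGD recursion with linear gradient ∇L(x) = Σ(x − θ*)
    (hrec : ∀ t ω, θ (t + 1) ω = θ t ω - β • (Sl (θ t ω - θstar) + ε t ω))
    -- noise conditionally centered given the past trajectory
    (hcent : ∀ t, ∀ u : EuclideanSpace ℝ (Fin d),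
      P[fun ω => ⟪u, ε t ω⟫ |
        MeasurableSpace.comap (fun ω => fun s : Fin (t + 1) => θ s ω) inferInstance]
        =ᵐ[P] 0)
    (πβ : Measure (EuclideanSpace ℝ (Fin d))) [IsProbabilityMeasure πβ]
    -- Wasserstein contraction of the marginals towards the invariant measure
    (hW : ∀ i : ℕ, W2sq (Measure.map (θ i) P) πβ ≤
      (Real.sqrt ((1 - β * mu) ^ 2 + β ^ 2 * LW)) ^ (2 * i) *
        W2sq (Measure.map (θ 0) P) πβ)
    (hmom : ∀ t, Integrable (fun ω => ‖θ t ω - θstar‖ ^ 2) P)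
    (hπmom : Integrable (fun x => ‖x - θstar‖ ^ 2) πβ) :
    ∀ i j : ℕ, i ≤ j →
      ∫ ω, ⟪θ i ω - θstar, θ j ω - θstar⟫ ∂P ≤
        2 * (1 - β * mu) ^ (j - i) *
          ((Real.sqrt ((1 - β * mu) ^ 2 + β ^ 2 * LW)) ^ (2 * i) *
              W2sq (Measure.map (θ 0) P) πβ +
            ∫ x, ‖x - θstar‖ ^ 2 ∂πβ) := by
  have hc : 0 ≤ 1 - β * mu := by
    have : β * (mu + Lc) ≤ 2 := (le_div_iff₀ (by linarith)).1 hβ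
    nlinarith
  have hβ2 : β * (mu + Lc) ≤ 2 := (le_div_iff₀ (by linarith)).1 hβ
  let T : EuclideanSpace ℝ (Fin d) →ₗ[ℝ] EuclideanSpace ℝ (Fin d) := LinearMap.id - β • Sl
  have hT : ∀ x, T x = x - β • Sl x := fun x => rfl
  have Tsym : ∀ x y, ⟪T x, y⟫ = ⟪x, T y⟫ := by
    intro x y
    simp only [hT, inner_sub_left, inner_sub_right, real_inner_smul_left, real_inner_smul_right,
      hsym]
  have Tn : ∀ x, ‖T x‖ ≤ (1 - β * mu) * ‖x‖ := by
    refine sym_norm_bound T _ hc Tsym ?_ ?_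
    · intro x
      rw [hT, inner_sub_right, real_inner_smul_right, real_inner_self_eq_norm_sq]
      have h := mul_le_mul_of_nonneg_left (hspec₂ x) hβ0.le
      nlinarith [sq_nonneg ‖x‖]
    · intro x
      rw [hT, inner_sub_right, real_inner_smul_right, real_inner_self_eq_norm_sq]
      have h := mul_le_mul_of_nonneg_left (hspec₁ x) hβ0.le
      nlinarith [sq_nonneg ‖x‖]
  have Tmeas : Measurable T := T.continuous_of_finiteDimensional.measurable
  have L2 : ∀ t, MemLp (fun ω => θ t ω - θstar) 2 P := fun t =>
    (memLp_two_iff_integrable_sq_norm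
      ((hθmeas t).sub_const θstar).aestronglyMeasurable).2 (hmom t)
  have TL2 : ∀ X : Ω → EuclideanSpace ℝ (Fin d), MemLp X 2 P → MemLp (fun ω => T (X ω)) 2 P :=
    fun X hX => (LinearMap.toContinuousLinearMap T).comp_memLp' hX
  have hstep : ∀ t ω, θ (t + 1) ω - θstar = T (θ t ω - θstar) - β • ε t ω := by
    intro t ω
    rw [hrec, hT, smul_add]; abel
  have eL2 : ∀ t, MemLp (ε t) 2 P := by
    intro t
    have := ((TL2 _ (L2 t)).sub (L2 (t + 1))).const_smul β⁻¹
    refine this.ae_eq (ae_of_all _ fun ω => ?_)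
    simp only [Pi.smul_apply, Pi.sub_apply, hstep t ω, sub_sub_cancel]
    rw [smul_smul, inv_mul_cancel₀ hβ0.ne', one_smul]
  have main : ∀ (i k : ℕ) (X : Ω → EuclideanSpace ℝ (Fin d)),
      Measurable[MeasurableSpace.comap (θ i) inferInstance] X → MemLp X 2 P →
      ∫ ω, ⟪X ω, θ (i + k) ω - θstar⟫ ∂P = ∫ ω, ⟪(T ^ k) (X ω), θ i ω - θstar⟫ ∂P := by
    intro i k
    induction k with
    | zero => intro X _ _; simp
    | succ k ih =>
      intro X hX hX2
      have hle : MeasurableSpace.comap (θ i) inferInstance ≤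
          MeasurableSpace.comap (fun ω => fun s : Fin (i + k + 1) => θ s ω) inferInstance := by
        rintro s ⟨B, hB, rfl⟩
        exact ⟨(fun f : Fin (i + k + 1) → EuclideanSpace ℝ (Fin d) => f ⟨i, by omega⟩) ⁻¹' B,
          measurable_pi_apply (X := fun _ : Fin (i + k + 1) => EuclideanSpace ℝ (Fin d))
            ⟨i, by omega⟩ hB, rfl⟩
      have hle0 : MeasurableSpace.comap (fun ω => fun s : Fin (i + k + 1) => θ s ω)
          inferInstance ≤ (inferInstance : MeasurableSpace Ω) :=
        (measurable_pi_lambda (fun ω => fun s : Fin (i + k + 1) => θ s ω)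
          fun s => hθmeas s).comap_le
      have ho := orth_noise P hle0 X (ε (i + k)) (hX.mono hle le_rfl) hX2 (eL2 _)
        (hcent (i + k))
      have e1 : ∀ ω, ⟪X ω, θ (i + (k + 1)) ω - θstar⟫
          = ⟪T (X ω), θ (i + k) ω - θstar⟫ - β * ⟪X ω, ε (i + k) ω⟫ := by
        intro ω
        rw [← add_assoc, hstep, inner_sub_right, real_inner_smul_right, Tsym]
      simp_rw [e1]
      rw [integral_sub (int_inner (TL2 X hX2) (L2 (i + k)))
        ((int_inner hX2 (eL2 (i + k))).const_mul β), integral_const_mul, ho,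
        ih (fun ω => T (X ω)) (Tmeas.comp hX) (TL2 X hX2)]
      simp [pow_succ]
  intro i j hij
  obtain ⟨k, rfl⟩ := Nat.exists_eq_add_of_le hij
  rw [Nat.add_sub_cancel_left]
  have Tk : ∀ k x, ‖(T ^ k) x‖ ≤ (1 - β * mu) ^ k * ‖x‖ := by
    intro k
    induction k with
    | zero => intro x; simp
    | succ k ih =>
      intro x
      rw [pow_succ, Module.End.mul_apply]
      calc _ ≤ (1 - β * mu) ^ k * ‖T x‖ := ih _
        _ ≤ (1 - β * mu) ^ k * ((1 - β * mu) * ‖x‖) := by gcongr; exact Tn x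
        _ = _ := by ring
  have hXm : Measurable[MeasurableSpace.comap (θ i) inferInstance]
      (fun ω => θ i ω - θstar) := by
    have h : Measurable (fun x : EuclideanSpace ℝ (Fin d) => x - θstar) := by fun_prop
    exact h.comp (comap_measurable (θ i))
  rw [main i k _ hXm (L2 i)]
  have TkL2 : MemLp (fun ω => (T ^ k) (θ i ω - θstar)) 2 P :=
    (LinearMap.toContinuousLinearMap (T ^ k)).comp_memLp' (L2 i)
  have hb : ∫ ω, ⟪(T ^ k) (θ i ω - θstar), θ i ω - θstar⟫ ∂P
      ≤ (1 - β * mu) ^ k * ∫ ω, ‖θ i ω - θstar‖ ^ 2 ∂P := by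
    rw [← integral_const_mul]
    refine integral_mono (int_inner TkL2 (L2 i)) ((hmom i).const_mul _) fun ω => ?_
    refine (real_inner_le_norm _ _).trans ?_
    have := mul_le_mul_of_nonneg_right (Tk k (θ i ω - θstar)) (norm_nonneg (θ i ω - θstar))
    calc _ ≤ _ := this
      _ = _ := by ring
  have : IsProbabilityMeasure (Measure.map (θ i) P) :=
    Measure.isProbabilityMeasure_map (hθmeas i).aemeasurable
  have hmap : Integrable (fun x => ‖x - θstar‖ ^ 2) (Measure.map (θ i) P) :=
    (integrable_map_measure (by fun_prop) (hθmeas i).aemeasurable).2 (hmom i)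
  have hs := second_moment_le (Measure.map (θ i) P) πβ θstar hmap hπmom
  rw [integral_map (hθmeas i).aemeasurable (by fun_prop)] at hs
  have hs2 := hs.trans (mul_le_mul_of_nonneg_left (add_le_add_left (hW i) _) zero_le_two)
  calc _ ≤ _ := hb
    _ ≤ _ := mul_le_mul_of_nonneg_left hs2 (pow_nonneg hc k)
    _ = _ := by ring
end
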